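/- Let K be a compact Hausdorff space and M ⊆ K a closed subset such that K ∖ M = ⋃_{n=1}^∞ H_n, where each H_n is open in its closure cl(H_n) and every point of H_n has a local base of connected sets relative to cl(H_n). If M (as a compact Hausdorff space with the subspace topology) has the Bishop property (B), then K has the Bishop property (B). -/

import Mathlib

open Set Topology Filter

/-- `f ≺ g`: `f ≠ g` and `f` agrees with `g` on the support of `f` (the closure of
the set where `f` is nonzero). -/
def Prec {K : Type*} [TopologicalSpace K] (f g : C(K, ℝ)) : Prop :=
  f ≠ g ∧ ∀ t ∈ closure {t | f t ≠ 0}, f t = g t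

/-- `f ≺_δ g`: `f ≺ g` and `‖f - g‖ ≥ δ`. -/
def PrecDelta {K : Type*} [TopologicalSpace K] [CompactSpace K] (δ : ℝ) (f g : C(K, ℝ)) : Prop :=
  Prec f g ∧ δ ≤ ‖f - g‖

/-- `F` is a `δ`-`≺`-chain. -/
def IsPrecChain {K : Type*} [TopologicalSpace K] [CompactSpace K] (δ : ℝ)
    (F : Set C(K, ℝ)) : Prop :=
  ∀ f ∈ F, ∀ g ∈ F, f ≠ g → PrecDelta δ f g ∨ PrecDelta δ g f

/-- A compact Hausdorff space has the Bishop property (B) if for every `δ > 0`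
every `δ`-`≺`-chain in `C(K)` is countable. -/
def HasBishop (K : Type*) [TopologicalSpace K] [CompactSpace K] [T2Space K] : Prop :=
  ∀ δ : ℝ, 0 < δ → ∀ F : Set C(K, ℝ), IsPrecChain δ F → F.Countable

/-- `t ∈ M` has a local base of connected sets relative to `M`: for every set `U`
open in `M` (with its subspace topology) containing `t`, there is a connected set `V`,
open in `M`, with `t ∈ V ⊆ U`. -/
def HasConnBase {K : Type*} [TopologicalSpace K] (M : Set K) (t : K) (ht : t ∈ M) : Prop :=
  ∀ U : Set ↥M, IsOpen U → (⟨t, ht⟩ : ↥M) ∈ U →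
    ∃ V : Set ↥M, IsOpen V ∧ IsConnected V ∧ (⟨t, ht⟩ : ↥M) ∈ V ∧ V ⊆ U

/-!
For a chain `F` and a point `t`, all nonzero values `f t` with `f ∈ F` coincide, so `t` cuts `F`
into the lower part `φ t = {f | f t = 0}` and the rest. Being uniformly `δ`-close on `M` is an
equivalence relation on a `δ`-chain; it has countably many classes because `M` has (B), so one may
assume that `F` is a single class. Then the set `J` of points at which the chain jumps from `0` to
a value of modulus at least `δ` misses `M`, the map `φ` from `J` to the cuts of `F` is continuous,
preimages of order intervals are compact, and `φ` takes every cut `{g | g ≤ f}` with `f` not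
maximal as a value. Connected neighbourhoods make `φ` locally constant on `closure (H n)` at the
points of `H n`.

It remains to see that such a `φ` has countable range. If `J` is compact and the range is
uncountable, Baire's theorem yields a point `t` near which `φ` is constant on the closed set of
points without a neighbourhood of countable image. The values below `φ t` have countable
cofinality, and so do those above it, by a club argument as for `ω₁`: a decreasing sequence of
closed unbounded sets has unbounded intersection, yet one can successively avoid every `H n`. So
`t` itself has a neighbourhood of countable image, a contradiction. The same cofinality statement
reduces the general case to compact order intervals.
-/

section SigmaLocallyConstant

variable {A B L : Type*} [TopologicalSpace A] [TopologicalSpace B] {φ : A → L}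

/-- `φ` is σ-locally constant: there are countably many closed sets such that every point lies in
one to which the restriction of `φ` is constant near that point. The closed sets stand for the
closures of the `H n` in the theorem. -/
def SigmaLocallyConstant (φ : A → L) : Prop :=
  ∃ C : ℕ → Set A, (∀ n, IsClosed (C n)) ∧ ∀ t, ∃ n, t ∈ C n ∧ ∀ᶠ s in 𝓝[C n] t, φ s = φ t

theorem SigmaLocallyConstant.comp (h : SigmaLocallyConstant φ) {g : B → A} (hg : Continuous g) :
    SigmaLocallyConstant (φ ∘ g) := by
  obtain ⟨C, hC, hloc⟩ := h
  refine ⟨fun n => g ⁻¹' C n, fun n => (hC n).preimage hg, fun t => ?_⟩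
  obtain ⟨n, htC, ht⟩ := hloc (g t)
  exact ⟨n, htC, (hg.continuousWithinAt.tendsto_nhdsWithin (mapsTo_preimage g _)).eventually ht⟩

theorem SigmaLocallyConstant.exists_eventually_eq [BaireSpace A] [Nonempty A]
    (h : SigmaLocallyConstant φ) : ∃ t, ∀ᶠ s in 𝓝 t, φ s = φ t := by
  obtain ⟨C, hC, hloc⟩ := h
  let G : ℕ → Set A := fun n => {t | t ∈ C n ∧ ∀ᶠ s in 𝓝[C n] t, φ s = φ t}
  obtain ⟨n, x, hx⟩ := nonempty_interior_of_iUnion_of_closed (f := fun n => closure (G n))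
    (fun n => isClosed_closure)
    (eq_univ_of_forall fun t => mem_iUnion.2 ((hloc t).imp fun n hn => subset_closure hn))
  obtain ⟨t, ht, -, hconst⟩ := mem_closure_iff.1 (interior_subset hx) _ isOpen_interior hx
  have hGC : closure (G n) ⊆ C n := closure_minimal (fun s hs => hs.1) (hC n)
  have hnhds : C n ∈ 𝓝 t :=
    mem_of_superset (isOpen_interior.mem_nhds ht) (interior_subset.trans hGC)
  exact ⟨t, by rwa [nhdsWithin_eq_nhds.2 hnhds] at hconst⟩

theorem isOpen_setOf_eventually_nhdsWithin_eq {C : Set A} (hC : IsClosed C) :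
    IsOpen {t | ∀ᶠ s in 𝓝[C] t, φ s = φ t} := by
  refine isOpen_iff_mem_nhds.2 fun t (hconst : ∀ᶠ s in 𝓝[C] t, φ s = φ t) => ?_
  have hnhds : ∀ᶠ s in 𝓝 t, s ∈ C → φ s = φ t ∧ ∀ᶠ u in 𝓝[C] s, φ u = φ t :=
    eventually_nhdsWithin_iff.1 (hconst.and (eventually_eventually_nhdsWithin.2 hconst))
  filter_upwards [hnhds] with s hs
  by_cases hsC : s ∈ C
  · simpa only [mem_ofPred_eq, (hs hsC).1] using (hs hsC).2
  · simp only [notMem_closure_iff_nhdsWithin_eq_bot.1 (hC.closure_eq.symm ▸ hsC),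
      eventually_bot]

end SigmaLocallyConstant

section Cofinality

variable {A L : Type*} [LinearOrder L] {φ : A → L} {S : Set L}

/-- The values of `φ` in `S` have uncountable cofinality: countably many of them are always strictly
exceeded by another one. -/
def HasUncountableCofinality (φ : A → L) (S : Set L) : Prop :=
  ∀ T ⊆ φ ⁻¹' S, T.Countable → ∃ z ∈ φ ⁻¹' S, ∀ w ∈ T, φ w < φ z

/-- `E` is closed and unbounded with respect to the values of `φ` in `S`, in analogy with the closed
unbounded subsets of an ordinal. -/
structure IsClosedUnbounded [TopologicalSpace A] (φ : A → L) (S : Set L) (E : Set A) : Prop where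
  isClosed : IsClosed E
  exists_lt : ∀ z ∈ φ ⁻¹' S, ∃ w ∈ E ∩ φ ⁻¹' S, φ z < φ w

theorem exists_strictMono_comp_of_forall_exists_lt {E : ℕ → Set A}
    (hE : ∀ k, ∀ z ∈ φ ⁻¹' S, ∃ w ∈ E k ∩ φ ⁻¹' S, φ z < φ w) {x : A} (hx : x ∈ φ ⁻¹' S) :
    ∃ z : ℕ → A, StrictMono (φ ∘ z) ∧ ∀ k, z k ∈ E k ∩ φ ⁻¹' S ∧ φ x < φ (z k) := by
  choose! next hnext hlt using hE
  let z : ℕ → A := fun k => Nat.rec (next 0 x) (fun k w => next (k + 1) w) k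
  have hz : ∀ k, z k ∈ E k ∩ φ ⁻¹' S := by
    intro k
    induction k with
    | zero => exact hnext 0 x hx
    | succ k ih => exact hnext (k + 1) (z k) ih.2
  have hmono : StrictMono (φ ∘ z) := strictMono_nat_of_lt_succ fun k => hlt (k + 1) (z k) (hz k).2
  exact ⟨z, hmono, fun k => ⟨hz k, (hlt 0 x hx).trans_le (hmono.monotone k.zero_le)⟩⟩

variable [TopologicalSpace A] [TopologicalSpace L] [OrderClosedTopology L]

theorem HasUncountableCofinality.exists_mapClusterPt (hcof : HasUncountableCofinality φ S)
    (hφ : Continuous φ) (hIcc : ∀ x y, IsCompact (φ ⁻¹' Icc (φ x) (φ y))) (hS : IsLowerSet S)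
    {z : ℕ → A} (hz : ∀ k, z k ∈ φ ⁻¹' S) (hmono : StrictMono (φ ∘ z)) :
    ∃ t ∈ φ ⁻¹' S, MapClusterPt t atTop z ∧ ∀ k, φ (z k) < φ t := by
  obtain ⟨y, hyS, hy⟩ := hcof (range z) (range_subset_iff.2 hz) (countable_range z)
  obtain ⟨t, ht, htz⟩ := (hIcc (z 0) y).exists_mapClusterPt (u := z) (f := atTop)
    (tendsto_principal.2 (Eventually.of_forall fun k =>
      ⟨hmono.monotone k.zero_le, (hy _ (mem_range_self k)).le⟩))
  refine ⟨t, hS ht.2 hyS, htz, fun k => ?_⟩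
  have hle : t ∈ φ ⁻¹' Ici (φ (z (k + 1))) := (isClosed_Ici.preimage hφ).mem_of_mapClusterPt htz
    ((eventually_ge_atTop (k + 1)).mono fun m hm => hmono.monotone hm)
  exact (hmono k.lt_succ_self).trans_le hle

theorem HasUncountableCofinality.isClosedUnbounded_iInter (hcof : HasUncountableCofinality φ S)
    (hφ : Continuous φ) (hIcc : ∀ x y, IsCompact (φ ⁻¹' Icc (φ x) (φ y))) (hS : IsLowerSet S)
    {E : ℕ → Set A} (hanti : Antitone E) (hE : ∀ k, IsClosedUnbounded φ S (E k)) :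
    IsClosedUnbounded φ S (⋂ k, E k) := by
  refine ⟨isClosed_iInter fun k => (hE k).isClosed, fun x hx => ?_⟩
  obtain ⟨z, hmono, hz⟩ := exists_strictMono_comp_of_forall_exists_lt (fun k => (hE k).exists_lt) hx
  obtain ⟨t, htS, htz, hlt⟩ := hcof.exists_mapClusterPt hφ hIcc hS (fun k => (hz k).1.2) hmono
  have htE : ∀ k, t ∈ E k := fun k => (hE k).isClosed.mem_of_mapClusterPt htz
    ((eventually_ge_atTop k).mono fun m hm => hanti hm (hz m).1.1)
  exact ⟨t, ⟨mem_iInter.2 htE, htS⟩, (hz 0).2.trans (hlt 0)⟩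

theorem HasUncountableCofinality.isClosedUnbounded_inter_compl (hcof : HasUncountableCofinality φ S)
    (hφ : Continuous φ) (hIcc : ∀ x y, IsCompact (φ ⁻¹' Icc (φ x) (φ y))) (hS : IsLowerSet S)
    {E C : Set A} (hC : IsClosed C) (hEC : IsClosedUnbounded φ S (E ∩ C)) :
    IsClosedUnbounded φ S (E ∩ C ∩ {t | ∀ᶠ s in 𝓝[C] t, φ s = φ t}ᶜ) := by
  refine ⟨hEC.isClosed.inter (isOpen_setOf_eventually_nhdsWithin_eq hC).isClosed_compl,
    fun x hx => ?_⟩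
  obtain ⟨z, hmono, hz⟩ := exists_strictMono_comp_of_forall_exists_lt (fun _ => hEC.exists_lt) hx
  obtain ⟨t, htS, htz, hlt⟩ := hcof.exists_mapClusterPt hφ hIcc hS (fun k => (hz k).1.2) hmono
  have htEC : t ∈ E ∩ C :=
    hEC.isClosed.mem_of_mapClusterPt htz (Eventually.of_forall fun k => (hz k).1.1)
  refine ⟨t, ⟨⟨htEC, fun hconst => ?_⟩, htS⟩, (hz 0).2.trans (hlt 0)⟩
  obtain ⟨k, hk⟩ := (htz.frequently (eventually_nhdsWithin_iff.1 hconst)).exists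
  exact (hlt k).ne (hk (hz k).1.1.2)

theorem HasUncountableCofinality.exists_isClosedUnbounded_subset
    (hcof : HasUncountableCofinality φ S) (hφ : Continuous φ)
    (hIcc : ∀ x y, IsCompact (φ ⁻¹' Icc (φ x) (φ y))) (hS : IsLowerSet S) {E C : Set A}
    (hC : IsClosed C) (hE : IsClosedUnbounded φ S E) :
    ∃ E' ⊆ E, IsClosedUnbounded φ S E' ∧
      ∀ t ∈ E' ∩ φ ⁻¹' S, t ∈ C → ¬ ∀ᶠ s in 𝓝[C] t, φ s = φ t := by
  by_cases hEC : IsClosedUnbounded φ S (E ∩ C)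
  · exact ⟨_, inter_subset_left.trans inter_subset_left,
      hcof.isClosedUnbounded_inter_compl hφ hIcc hS hC hEC, fun t ht _ => ht.1.2⟩
  obtain ⟨x, hx, hxC⟩ : ∃ x ∈ φ ⁻¹' S, ∀ w ∈ E ∩ C ∩ φ ⁻¹' S, φ w ≤ φ x := by
    by_contra! hcon
    exact hEC ⟨hE.isClosed.inter hC, hcon⟩
  obtain ⟨y, ⟨-, hyS⟩, hxy⟩ := hE.exists_lt x hx
  refine ⟨E ∩ φ ⁻¹' Ici (φ y), inter_subset_left,
    ⟨hE.isClosed.inter (isClosed_Ici.preimage hφ), fun z hz => ?_⟩, fun t ht htC => ?_⟩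
  · rcases le_total (φ z) (φ y) with hzy | hyz
    · obtain ⟨w, hw, hyw⟩ := hE.exists_lt y hyS
      exact ⟨w, ⟨⟨hw.1, hyw.le⟩, hw.2⟩, hzy.trans_lt hyw⟩
    · obtain ⟨w, hw, hzw⟩ := hE.exists_lt z hz
      exact ⟨w, ⟨⟨hw.1, hyz.trans hzw.le⟩, hw.2⟩, hzw⟩
  · exact absurd (hxC t ⟨⟨ht.1.1, htC⟩, ht.2⟩) (hxy.trans_le ht.1.2).not_ge

theorem SigmaLocallyConstant.not_hasUncountableCofinality (h : SigmaLocallyConstant φ)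
    (hφ : Continuous φ) (hIcc : ∀ x y, IsCompact (φ ⁻¹' Icc (φ x) (φ y))) (hS : IsLowerSet S) :
    ¬ HasUncountableCofinality φ S := by
  intro hcof
  obtain ⟨C, hC, hloc⟩ := h
  choose! next hsub hunbdd havoid using fun n E (hE : IsClosedUnbounded φ S E) =>
    hcof.exists_isClosedUnbounded_subset hφ hIcc hS (hC n) hE
  let E : ℕ → Set A := fun n => Nat.rec univ next n
  have huniv : IsClosedUnbounded φ S univ := by
    refine ⟨isClosed_univ, fun z hz => ?_⟩
    obtain ⟨w, hw, hzw⟩ := hcof {z} (singleton_subset_iff.2 hz) (countable_singleton z)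
    exact ⟨w, ⟨trivial, hw⟩, hzw z rfl⟩
  have hE : ∀ n, IsClosedUnbounded φ S (E n) := by
    intro n
    induction n with
    | zero => exact huniv
    | succ n ih => exact hunbdd n (E n) ih
  have hanti : Antitone E := antitone_nat_of_succ_le fun n => hsub n (E n) (hE n)
  obtain ⟨x, hx, -⟩ := hcof ∅ (empty_subset _) countable_empty
  obtain ⟨t, ⟨htE, htS⟩, -⟩ := (hcof.isClosedUnbounded_iInter hφ hIcc hS hanti hE).exists_lt x hx
  obtain ⟨n, htC, hconst⟩ := hloc t
  exact havoid n (E n) (hE n) t ⟨mem_iInter.1 htE (n + 1), htS⟩ htC hconst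

end Cofinality

section CountableRange

variable {A L : Type*} [TopologicalSpace A] [LinearOrder L] [TopologicalSpace L]
  [OrderClosedTopology L] {φ : A → L}

theorem SigmaLocallyConstant.countable_image_inter_of_isLowerSet (h : SigmaLocallyConstant φ)
    (hφ : Continuous φ) (hIcc : ∀ x y, IsCompact (φ ⁻¹' Icc (φ x) (φ y)))
    {S : Set L} (hS : IsLowerSet S) {W : Set A}
    (hW : ∀ x ∈ φ ⁻¹' S, (φ '' (W ∩ φ ⁻¹' Iic (φ x))).Countable) :
    (φ '' (W ∩ φ ⁻¹' S)).Countable := by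
  obtain ⟨T, hTS, hT, hcof⟩ : ∃ T ⊆ φ ⁻¹' S, T.Countable ∧ ∀ z ∈ φ ⁻¹' S, ∃ w ∈ T, φ z ≤ φ w := by
    by_contra! hcon
    exact h.not_hasUncountableCofinality hφ hIcc hS hcon
  refine (hT.biUnion fun w hw => hW w (hTS hw)).mono ?_
  rintro _ ⟨z, ⟨hzW, hzS⟩, rfl⟩
  obtain ⟨w, hw, hzw⟩ := hcof z hzS
  exact mem_biUnion hw ⟨z, ⟨hzW, hzw⟩, rfl⟩

theorem SigmaLocallyConstant.countable_image_inter_of_isUpperSet (h : SigmaLocallyConstant φ)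
    (hφ : Continuous φ) (hIcc : ∀ x y, IsCompact (φ ⁻¹' Icc (φ x) (φ y)))
    {S : Set L} (hS : IsUpperSet S) {W : Set A}
    (hW : ∀ x ∈ φ ⁻¹' S, (φ '' (W ∩ φ ⁻¹' Ici (φ x))).Countable) :
    (φ '' (W ∩ φ ⁻¹' S)).Countable := by
  have hdual : SigmaLocallyConstant (OrderDual.toDual ∘ φ) := h
  refine hdual.countable_image_inter_of_isLowerSet hφ (fun x y => ?_) hS.toDual hW
  rw [Function.comp_apply, Function.comp_apply, Icc_toDual]
  exact hIcc y x

theorem countable_image_of_isCompact_of_forall_exists_mem_nhds {α : Type*} {f : A → α} {Q : Set A}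
    (hQ : IsCompact Q) (hloc : ∀ t ∈ Q, ∃ V ∈ 𝓝 t, (f '' V).Countable) : (f '' Q).Countable := by
  refine hQ.induction_on (p := fun V => (f '' V).Countable) (by simp)
    (fun V W hVW hW => hW.mono (image_mono hVW))
    (fun V W hV hW => by simpa only [image_union] using hV.union hW) fun t ht => ?_
  obtain ⟨V, hV, hcount⟩ := hloc t ht
  exact ⟨V, mem_nhdsWithin_of_mem_nhds hV, hcount⟩

theorem SigmaLocallyConstant.countable_image_of_forall_eq [CompactSpace A]
    (h : SigmaLocallyConstant φ) (hφ : Continuous φ) {W : Set A} (hW : IsClosed W) {t : A}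
    (hconst : ∀ s ∈ W, (∀ V ∈ 𝓝 s, ¬ (φ '' V).Countable) → φ s = φ t) : (φ '' W).Countable := by
  have hIcc : ∀ x y, IsCompact (φ ⁻¹' Icc (φ x) (φ y)) := fun x y =>
    (isClosed_Icc.preimage hφ).isCompact
  have hcount : ∀ D : Set L, IsClosed D → φ t ∉ D → (φ '' (W ∩ φ ⁻¹' D)).Countable := by
    refine fun D hD htD => countable_image_of_isCompact_of_forall_exists_mem_nhds
      (hW.inter (hD.preimage hφ)).isCompact fun s hs => ?_
    by_contra! hcon
    exact htD (hconst s hs.1 hcon ▸ hs.2)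
  have hbelow : (φ '' (W ∩ φ ⁻¹' Iio (φ t))).Countable :=
    h.countable_image_inter_of_isLowerSet hφ hIcc (isLowerSet_Iio _) fun x hx =>
      hcount _ isClosed_Iic (not_le.2 hx)
  have habove : (φ '' (W ∩ φ ⁻¹' Ioi (φ t))).Countable :=
    h.countable_image_inter_of_isUpperSet hφ hIcc (isUpperSet_Ioi _) fun x hx =>
      hcount _ isClosed_Ici (not_le.2 hx)
  refine ((hbelow.union habove).insert (φ t)).mono ?_
  rintro _ ⟨s, hs, rfl⟩
  rcases lt_trichotomy (φ s) (φ t) with hlt | heq | hgt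
  · exact Or.inr (Or.inl ⟨s, ⟨hs, hlt⟩, rfl⟩)
  · exact Or.inl heq
  · exact Or.inr (Or.inr ⟨s, ⟨hs, hgt⟩, rfl⟩)

variable [T2Space A]

theorem SigmaLocallyConstant.countable_range_of_compactSpace [CompactSpace A]
    (h : SigmaLocallyConstant φ) (hφ : Continuous φ) : (range φ).Countable := by
  let Y : Set A := {t | ∀ V ∈ 𝓝 t, ¬ (φ '' V).Countable}
  have hYclosed : IsClosed Y := by
    refine isOpen_compl_iff.1 (isOpen_iff_mem_nhds.2 fun t ht => ?_)
    simp only [Y, mem_compl_iff, mem_ofPred_eq, not_forall, not_not, exists_prop] at ht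
    obtain ⟨V, hV, hcount⟩ := ht
    filter_upwards [eventually_mem_nhds_iff.2 hV] with s hs hsY
    exact hsY V hs hcount
  have hY : Y = ∅ := by
    by_contra! hne
    have : Nonempty Y := hne.to_subtype
    have : CompactSpace Y := isCompact_iff_compactSpace.1 hYclosed.isCompact
    obtain ⟨t, ht⟩ := (h.comp (continuous_subtype_val (p := (· ∈ Y)))).exists_eventually_eq
    obtain ⟨W, ⟨hWt, hW⟩, hWconst⟩ := (closed_nhds_basis (t : A)).eventually_iff.1
      ((eventually_nhds_subtype_iff Y t (fun s => φ s = φ t)).1 ht |> eventually_nhdsWithin_iff.1)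
    exact t.2 W hWt (h.countable_image_of_forall_eq hφ hW fun s hs hsY => hWconst hs hsY)
  rw [← image_univ]
  refine countable_image_of_isCompact_of_forall_exists_mem_nhds isCompact_univ fun t _ => ?_
  by_contra! hcon
  exact hY.subset hcon

theorem SigmaLocallyConstant.countable_range (h : SigmaLocallyConstant φ) (hφ : Continuous φ)
    (hIcc : ∀ x y, IsCompact (φ ⁻¹' Icc (φ x) (φ y))) : (range φ).Countable := by
  have hcount : ∀ x y, (φ '' (φ ⁻¹' Iic (φ y) ∩ φ ⁻¹' Ici (φ x))).Countable := by
    intro x y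
    rw [← preimage_inter, inter_comm, Ici_inter_Iic]
    have : CompactSpace (φ ⁻¹' Icc (φ x) (φ y)) := isCompact_iff_compactSpace.1 (hIcc x y)
    have hrange := (h.comp (continuous_subtype_val (p := (· ∈ φ ⁻¹' Icc (φ x) (φ y))))
      ).countable_range_of_compactSpace (hφ.comp continuous_subtype_val)
    rwa [range_comp, Subtype.range_coe] at hrange
  have hIic : ∀ y, (φ '' (φ ⁻¹' Iic (φ y))).Countable := fun y => by
    simpa using h.countable_image_inter_of_isUpperSet hφ hIcc isUpperSet_univ fun x _ => hcount x y
  simpa using h.countable_image_inter_of_isLowerSet hφ hIcc isLowerSet_univ (W := univ)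
    fun y _ => by simpa using hIic y

end CountableRange

theorem countable_of_setoid {α : Type*} (r : Setoid α)
    (hpairwise : ∀ S : Set α, S.Pairwise (fun a b => ¬ r a b) → S.Countable)
    (hclass : ∀ a, {b | r a b}.Countable) : Countable α := by
  have hout : (range (Quotient.out : Quotient r → α)).Countable := by
    refine hpairwise _ ?_
    rintro _ ⟨p, rfl⟩ _ ⟨q, rfl⟩ hne hpq
    exact hne (congrArg _ (Quotient.out_equiv_out.1 hpq))
  refine countable_univ_iff.1 ((hout.biUnion fun a _ => hclass a).mono fun b _ => ?_)
  exact mem_biUnion (mem_range_self (Quotient.mk r b)) (Quotient.mk_out b)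

section Prec

variable {K : Type*} [TopologicalSpace K]

theorem Prec.eq_of_ne_zero {f g : C(K, ℝ)} (h : Prec f g) {t : K} (ht : f t ≠ 0) : f t = g t :=
  h.2 t (subset_closure ht)

theorem Prec.asymm {f g : C(K, ℝ)} (h : Prec f g) : ¬ Prec g f := by
  intro h'
  refine h.1 (ContinuousMap.ext fun t => ?_)
  by_cases hf : f t = 0
  · by_cases hg : g t = 0
    · rw [hf, hg]
    · exact (h'.eq_of_ne_zero hg).symm
  · exact h.eq_of_ne_zero hf

theorem Prec.trans {f g k : C(K, ℝ)} (h : Prec f g) (h' : Prec g k) : Prec f k := by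
  refine ⟨fun hfk => h.asymm (hfk ▸ h'), fun t ht => ?_⟩
  have hsub : {t | f t ≠ 0} ⊆ {t | g t ≠ 0} := fun s hs => by
    rw [mem_ofPred_eq, ← h.eq_of_ne_zero hs]
    exact hs
  rw [h.2 t ht, h'.2 t (closure_mono hsub ht)]

theorem Prec.restrict {f g : C(K, ℝ)} (h : Prec f g) {M : Set K}
    (hne : f.restrict M ≠ g.restrict M) : Prec (f.restrict M) (g.restrict M) :=
  ⟨hne, fun t ht => h.2 t (map_mem_closure continuous_subtype_val ht fun _ hs => hs)⟩

end Prec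

/-- The family `F` is strictly increasing with respect to `≺`. This is the indexed form of a chain,
with the order of the chain carried by the index type. -/
def PrecStrictMono {K ι : Type*} [TopologicalSpace K] [LT ι] (F : ι → C(K, ℝ)) : Prop :=
  ∀ ⦃i j⦄, i < j → Prec (F i) (F j)

section JumpSet

variable {K ι : Type*} [TopologicalSpace K]

/-- The points at which some member of the family vanishes while another one has modulus at least
`δ`. -/
def jumpSet (F : ι → C(K, ℝ)) (δ : ℝ) : Set K :=
  {t | ∃ i j, F i t = 0 ∧ δ ≤ |F j t|}

theorem exists_ne_zero_of_mem_jumpSet {F : ι → C(K, ℝ)} {δ : ℝ} (hδ : 0 < δ) {t : K}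
    (ht : t ∈ jumpSet F δ) : ∃ j, F j t ≠ 0 := by
  obtain ⟨-, j, -, hj⟩ := ht
  exact ⟨j, abs_pos.1 (hδ.trans_le hj)⟩

theorem isClosed_setOf_eq_zero_and_le_abs (F : ι → C(K, ℝ)) (δ : ℝ) (i j : ι) :
    IsClosed {t | F i t = 0 ∧ δ ≤ |F j t|} :=
  (isClosed_eq (F i).continuous continuous_const).inter
    (isClosed_le continuous_const (F j).continuous.abs)

end JumpSet

namespace PrecStrictMono

variable {K : Type*} [TopologicalSpace K] {ι : Type*} [LinearOrder ι] {F : ι → C(K, ℝ)} {δ : ℝ}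

theorem apply_eq_of_le (hF : PrecStrictMono F) {i j : ι} (hij : i ≤ j) {t : K} (ht : F i t ≠ 0) :
    F i t = F j t := by
  rcases hij.eq_or_lt with rfl | hlt
  · rfl
  · exact (hF hlt).eq_of_ne_zero ht

theorem apply_eq_of_ne_zero (hF : PrecStrictMono F) {i j : ι} {t : K} (hi : F i t ≠ 0)
    (hj : F j t ≠ 0) : F i t = F j t := by
  rcases le_total i j with h | h
  · exact hF.apply_eq_of_le h hi
  · exact (hF.apply_eq_of_le h hj).symm

/-- The cut of the index set determined by `t`: the indices at which the family has not yet become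
nonzero at `t`. -/
def zeroCut (hF : PrecStrictMono F) (t : K) : LowerSet ι where
  carrier := {i | F i t = 0}
  lower' := by
    intro j i hij hj
    by_contra hi
    exact hi ((hF.apply_eq_of_le hij hi).trans hj)

theorem mem_zeroCut {hF : PrecStrictMono F} {t : K} {i : ι} : i ∈ hF.zeroCut t ↔ F i t = 0 :=
  Iff.rfl

theorem le_abs_apply_of_mem_jumpSet (hF : PrecStrictMono F) (hδ : 0 < δ) {t : K}
    (ht : t ∈ jumpSet F δ) {j : ι} (hj : F j t ≠ 0) : δ ≤ |F j t| := by
  obtain ⟨-, k, -, hk⟩ := ht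
  rwa [hF.apply_eq_of_ne_zero hj (abs_pos.1 (hδ.trans_le hk))]

theorem eventually_apply_eq_zero (hF : PrecStrictMono F) {i j : ι} {t : K} (hi : F i t = 0)
    (hj : F j t ≠ 0) : ∀ᶠ s in 𝓝 t, F i s = 0 := by
  have hij : F i t ≠ F j t := hi.trans_ne hj.symm
  filter_upwards [(F j).continuous.continuousAt.eventually_ne hj,
    (isOpen_ne_fun (F i).continuous (F j).continuous).mem_nhds hij] with s hs hne
  by_contra his
  exact hne (hF.apply_eq_of_ne_zero his hs)

theorem continuous_zeroCut [TopologicalSpace (LowerSet ι)] [OrderTopology (LowerSet ι)]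
    (hF : PrecStrictMono F) (hδ : 0 < δ) : Continuous fun t : jumpSet F δ => hF.zeroCut t := by
  refine OrderTopology.continuous_iff.2 fun a =>
    ⟨isOpen_iff_mem_nhds.2 fun t (ht : a < hF.zeroCut t) => ?_,
      isOpen_iff_mem_nhds.2 fun t (ht : hF.zeroCut t < a) => ?_⟩
  · obtain ⟨i, hi, hia⟩ := not_subset.1 (LowerSet.coe_subset_coe.not.2 ht.not_ge)
    obtain ⟨j, hj⟩ := exists_ne_zero_of_mem_jumpSet hδ t.2
    filter_upwards [continuous_subtype_val.continuousAt.eventually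
      (hF.eventually_apply_eq_zero hi hj)] with s hs
    rw [mem_preimage, mem_Ioi, ← not_le]
    exact fun hle => hia (hle hs)
  · obtain ⟨i, hia, hi⟩ := not_subset.1 (LowerSet.coe_subset_coe.not.2 ht.not_ge)
    filter_upwards [continuous_subtype_val.continuousAt.eventually
      ((F i).continuous.continuousAt.eventually_ne hi)] with s hs
    rw [mem_preimage, mem_Iio, ← not_le]
    exact fun hle => hs (hle hia)

theorem zeroCut_eq_of_isPreconnected (hF : PrecStrictMono F) {V : Set K} (hV : IsPreconnected V)
    {j : ι} (hj : ∀ s ∈ V, F j s ≠ 0) {s t : K} (hs : s ∈ V) (ht : t ∈ V) :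
    hF.zeroCut s = hF.zeroCut t := by
  have hratio : ∀ i, F i s / F j s = F i t / F j t := by
    intro i
    refine hV.constant_of_mapsTo (T := {0, 1}) (toFinite _).isDiscrete
      (f := fun u => F i u / F j u)
      ((F i).continuous.continuousOn.div (F j).continuous.continuousOn hj) (fun u hu => ?_) hs ht
    by_cases hiu : F i u = 0
    · exact Or.inl (by simp [hiu])
    · exact Or.inr (by simp [hF.apply_eq_of_ne_zero hiu (hj u hu), hj u hu])
  refine SetLike.ext fun i => ?_
  have hzero : F i s / F j s = 0 ↔ F i t / F j t = 0 := by rw [hratio]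
  simpa [mem_zeroCut, hj s hs, hj t ht] using hzero

theorem sigmaLocallyConstant_zeroCut (hF : PrecStrictMono F) (hδ : 0 < δ) {H : ℕ → Set K}
    (hcover : jumpSet F δ ⊆ ⋃ n, H n)
    (hconn : ∀ n, ∀ t, ∀ ht : t ∈ H n, HasConnBase (closure (H n)) t (subset_closure ht)) :
    SigmaLocallyConstant fun t : jumpSet F δ => hF.zeroCut t := by
  refine ⟨fun n => (↑) ⁻¹' closure (H n),
    fun n => isClosed_closure.preimage continuous_subtype_val, fun t => ?_⟩
  obtain ⟨n, htH⟩ := mem_iUnion.1 (hcover t.2)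
  refine ⟨n, subset_closure htH, ?_⟩
  obtain ⟨j, hj⟩ := exists_ne_zero_of_mem_jumpSet hδ t.2
  obtain ⟨V, hVopen, hVconn, htV, hVsub⟩ := hconn n t htH {s | F j s ≠ 0}
    (isOpen_ne_fun ((F j).continuous.comp continuous_subtype_val) continuous_const) hj
  obtain ⟨W, hW, rfl⟩ := isOpen_induced_iff.1 hVopen
  have hWt : (↑) ⁻¹' W ∈ 𝓝 t := (hW.preimage continuous_subtype_val).mem_nhds htV
  filter_upwards [mem_nhdsWithin_of_mem_nhds hWt, self_mem_nhdsWithin] with s hsW hsC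
  exact hF.zeroCut_eq_of_isPreconnected
    (hVconn.isPreconnected.image _ continuous_subtype_val.continuousOn)
    (forall_mem_image.2 hVsub) ⟨⟨s, hsC⟩, hsW, rfl⟩ ⟨_, htV, rfl⟩

variable [CompactSpace K]

theorem isCompact_preimage_zeroCut_Icc [TopologicalSpace (LowerSet ι)]
    [OrderTopology (LowerSet ι)] (hF : PrecStrictMono F) (hδ : 0 < δ) (x y : jumpSet F δ) :
    IsCompact ((fun t : jumpSet F δ => hF.zeroCut t) ⁻¹' Icc (hF.zeroCut x) (hF.zeroCut y)) := by
  obtain ⟨i, -, hi, -⟩ := x.2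
  obtain ⟨j, hj⟩ := exists_ne_zero_of_mem_jumpSet hδ y.2
  have hcompact : IsCompact ((↑) ⁻¹' {t | F i t = 0 ∧ δ ≤ |F j t|} : Set (jumpSet F δ)) := by
    refine IsEmbedding.subtypeVal.isInducing.isCompact_preimage'
      (isClosed_setOf_eq_zero_and_le_abs F δ i j).isCompact ?_
    rw [Subtype.range_coe]
    exact fun t ht => ⟨i, j, ht⟩
  refine hcompact.of_isClosed_subset (isClosed_Icc.preimage (hF.continuous_zeroCut hδ)) ?_
  rintro t ⟨hxt, hty⟩
  exact ⟨hxt hi, hF.le_abs_apply_of_mem_jumpSet hδ t.2 fun hjt => hj (hty hjt)⟩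

theorem exists_eq_zero_and_le_abs (hF : PrecStrictMono F) (hδ : 0 < δ) {i j : ι} (hij : i ≤ j)
    (hnorm : δ ≤ ‖F i - F j‖) : ∃ t, F i t = 0 ∧ δ ≤ |F j t| := by
  obtain ⟨t, ht⟩ : ∃ t, δ ≤ |F i t - F j t| := by
    by_contra! hlt
    exact hnorm.not_gt ((ContinuousMap.norm_lt_iff _ hδ).2 hlt)
  have hi : F i t = 0 := by
    by_contra hi
    rw [hF.apply_eq_of_le hij hi, sub_self, abs_zero] at ht
    exact ht.not_gt hδ
  exact ⟨t, hi, by simpa [hi] using ht⟩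

theorem exists_zeroCut_eq_Iic (hF : PrecStrictMono F) (hδ : 0 < δ)
    (hnorm : ∀ i j, i < j → δ ≤ ‖F i - F j‖) {i : ι} (hi : ¬ IsMax i) :
    ∃ t ∈ jumpSet F δ, hF.zeroCut t = LowerSet.Iic i := by
  let B : Ioi i → Set K := fun k => {t | F i t = 0 ∧ δ ≤ |F k t|}
  have hmono : Monotone B := fun k l hkl t ht =>
    ⟨ht.1, hF.apply_eq_of_le hkl (abs_pos.1 (hδ.trans_le ht.2)) ▸ ht.2⟩
  obtain ⟨j, hij⟩ := not_isMax_iff.1 hi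
  have : Nonempty (Ioi i) := ⟨⟨j, hij⟩⟩
  obtain ⟨t, ht⟩ := IsCompact.nonempty_iInter_of_directed_nonempty_isCompact_isClosed B
    hmono.directed_ge (fun k => hF.exists_eq_zero_and_le_abs hδ (le_of_lt k.2) (hnorm i k k.2))
    (fun k => (isClosed_setOf_eq_zero_and_le_abs F δ i k).isCompact)
    (fun k => isClosed_setOf_eq_zero_and_le_abs F δ i k)
  rw [mem_iInter] at ht
  refine ⟨t, ⟨i, j, ht ⟨j, hij⟩⟩, le_antisymm (fun k hk => ?_) ?_⟩
  · by_contra hki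
    exact (abs_pos.1 (hδ.trans_le (ht ⟨k, not_le.1 hki⟩).2)) hk
  · exact LowerSet.Iic_le.2 (ht ⟨j, hij⟩).1

theorem countable_index [T2Space K] (hF : PrecStrictMono F) (hδ : 0 < δ)
    (hnorm : ∀ i j, i < j → δ ≤ ‖F i - F j‖)
    (hloc : SigmaLocallyConstant fun t : jumpSet F δ => hF.zeroCut t) : Countable ι := by
  let _ : TopologicalSpace (LowerSet ι) := Preorder.topology _
  have : OrderTopology (LowerSet ι) := ⟨rfl⟩
  have hrange : (range fun t : jumpSet F δ => hF.zeroCut t).Countable :=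
    hloc.countable_range (hF.continuous_zeroCut hδ) (hF.isCompact_preimage_zeroCut_Icc hδ)
  have hmax : {i : ι | IsMax i}.Countable := by
    simpa only [isTop_iff_isMax] using (subsingleton_isTop ι).countable
  have hnonmax : {i : ι | ¬ IsMax i}.Countable := by
    refine (hrange.preimage_of_injOn (f := LowerSet.Iic) fun i _ k _ => LowerSet.Iic_inj.1).mono ?_
    intro i hi
    obtain ⟨t, ht, hti⟩ := hF.exists_zeroCut_eq_Iic hδ hnorm hi
    exact ⟨⟨t, ht⟩, hti⟩
  exact countable_univ_iff.1 ((hmax.union hnonmax).mono fun i _ => em _)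

end PrecStrictMono

section Classes

variable {K : Type*} [TopologicalSpace K] [CompactSpace K] {δ : ℝ}

theorem exists_linearOrder_forall_precDelta {ι : Type*} {F : ι → C(K, ℝ)}
    (hF : Pairwise fun i j => PrecDelta δ (F i) (F j) ∨ PrecDelta δ (F j) (F i)) :
    ∃ _ : LinearOrder ι, ∀ i j, i < j → PrecDelta δ (F i) (F j) := by
  classical
  have : IsStrictTotalOrder ι fun i j => Prec (F i) (F j) :=
    { trichotomous := fun i j hij hji => by
        by_contra hne
        exact (hF hne).elim (hij ·.1) (hji ·.1)
      irrefl := fun i hi => hi.1 rfl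
      trans := fun i j k => Prec.trans }
  refine ⟨linearOrderOfSTO fun i j => Prec (F i) (F j), fun i j (hij : Prec (F i) (F j)) => ?_⟩
  exact (hF fun h => hij.1 (congrArg F h)).resolve_right fun hji => hij.asymm hji.1

theorem countable_of_pairwise_precDelta_of_abs_sub_lt [T2Space K] {ι : Type*} {F : ι → C(K, ℝ)}
    (hδ : 0 < δ) (hF : Pairwise fun i j => PrecDelta δ (F i) (F j) ∨ PrecDelta δ (F j) (F i))
    {M : Set K} {H : ℕ → Set K} (hcover : Mᶜ ⊆ ⋃ n, H n)
    (hconn : ∀ n, ∀ t, ∀ ht : t ∈ H n, HasConnBase (closure (H n)) t (subset_closure ht))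
    (hclose : ∀ i j, ∀ t ∈ M, |F i t - F j t| < δ) : Countable ι := by
  obtain ⟨_, hlt⟩ := exists_linearOrder_forall_precDelta hF
  have hmono : PrecStrictMono F := fun i j hij => (hlt i j hij).1
  have hjump : jumpSet F δ ⊆ Mᶜ := by
    rintro t ⟨i, j, hi, hj⟩ htM
    have hij := hclose i j t htM
    rw [hi, zero_sub, abs_neg] at hij
    exact hij.not_ge hj
  exact hmono.countable_index hδ (fun i j hij => (hlt i j hij).2)
    (hmono.sigmaLocallyConstant_zeroCut hδ (hjump.trans hcover) hconn)

variable {F : Set C(K, ℝ)}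

theorem IsPrecChain.apply_eq_of_ne_zero (hF : IsPrecChain δ F) {f g : C(K, ℝ)} (hf : f ∈ F)
    (hg : g ∈ F) {t : K} (hft : f t ≠ 0) (hgt : g t ≠ 0) : f t = g t := by
  by_cases hfg : f = g
  · rw [hfg]
  rcases hF f hf g hg hfg with h | h
  · exact h.1.eq_of_ne_zero hft
  · exact (h.1.eq_of_ne_zero hgt).symm

theorem IsPrecChain.abs_sub_lt_trans (hF : IsPrecChain δ F) {f g k : C(K, ℝ)} (hf : f ∈ F)
    (hg : g ∈ F) (hk : k ∈ F) {t : K} (hfg : |f t - g t| < δ) (hgk : |g t - k t| < δ) :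
    |f t - k t| < δ := by
  -- The members of a chain take at most two values at `t`.
  have htwo : f t = g t ∨ g t = k t ∨ f t = k t := by
    have hfg := hF.apply_eq_of_ne_zero hf hg (t := t)
    have hgk := hF.apply_eq_of_ne_zero hg hk (t := t)
    have hfk := hF.apply_eq_of_ne_zero hf hk (t := t)
    grind
  rcases htwo with h | h | h
  · rwa [h]
  · rwa [← h]
  · rw [h, sub_self, abs_zero]
    exact (abs_nonneg _).trans_lt hfg

/-- Uniform `δ`-closeness on `M`, as an equivalence relation on a chain. -/
def IsPrecChain.closeOn (hF : IsPrecChain δ F) (hδ : 0 < δ) (M : Set K) : Setoid F where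
  r f g := ∀ t ∈ M, |(f : C(K, ℝ)) t - (g : C(K, ℝ)) t| < δ
  iseqv :=
    { refl := fun f t _ => by simpa using hδ
      symm := fun hfg t ht => by simpa only [abs_sub_comm] using hfg t ht
      trans := fun {f g k} hfg hgk t ht =>
        hF.abs_sub_lt_trans f.2 g.2 k.2 (hfg t ht) (hgk t ht) }

theorem IsPrecChain.countable_of_pairwise_not_closeOn (hF : IsPrecChain δ F) (hδ : 0 < δ)
    {M : Set K} [CompactSpace M] [T2Space M] (hM : HasBishop M) {S : Set F}
    (hS : S.Pairwise fun f g => ¬ hF.closeOn hδ M f g) : S.Countable := by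
  let res : F → C(M, ℝ) := fun f => (f : C(K, ℝ)).restrict M
  have hnorm : ∀ f ∈ S, ∀ g ∈ S, f ≠ g → δ ≤ ‖res f - res g‖ := by
    intro f hf g hg hne
    by_contra! hlt
    exact hS hf hg hne fun t ht => (ContinuousMap.norm_lt_iff _ hδ).1 hlt ⟨t, ht⟩
  have hinj : InjOn res S := by
    intro f hf g hg hfg
    by_contra hne
    have hle := hnorm f hf g hg hne
    rw [hfg, sub_self, norm_zero] at hle
    exact hle.not_gt hδ
  have hchain : IsPrecChain δ (res '' S) := by
    rintro _ ⟨f, hf, rfl⟩ _ ⟨g, hg, rfl⟩ hne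
    have hfg : f ≠ g := fun h => hne (congrArg res h)
    exact (hF f f.2 g g.2 (Subtype.coe_ne_coe.2 hfg)).imp
      (fun h => ⟨h.1.restrict hne, hnorm f hf g hg hfg⟩)
      (fun h => ⟨h.1.restrict hne.symm, hnorm g hg f hf hfg.symm⟩)
  exact countable_of_injective_of_countable_image hinj (hM δ hδ _ hchain)

end Classes

theorem stmt8_general {K : Type*} [TopologicalSpace K] [CompactSpace K] [T2Space K]
    (M : Set K) (hM : IsClosed M) (H : ℕ → Set K) (hcover : Mᶜ ⊆ ⋃ n, H n)
    (hconn : ∀ n, ∀ t, ∀ ht : t ∈ H n, HasConnBase (closure (H n)) t (subset_closure ht))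
    (hMB : @HasBishop ↥M _ (isCompact_iff_compactSpace.mp hM.isCompact) inferInstance) :
    HasBishop K := by
  have : CompactSpace M := isCompact_iff_compactSpace.mp hM.isCompact
  intro δ hδ F hF
  refine countable_coe_iff.1 (countable_of_setoid (hF.closeOn hδ M)
    (fun S => hF.countable_of_pairwise_not_closeOn hδ hMB) fun f => ?_)
  have hchain : Pairwise fun g k : {g | hF.closeOn hδ M f g} =>
      PrecDelta δ (g : C(K, ℝ)) k ∨ PrecDelta δ (k : C(K, ℝ)) g := fun g k hgk =>
    hF _ g.1.2 _ k.1.2 (Subtype.coe_ne_coe.2 (Subtype.coe_ne_coe.2 hgk))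
  exact countable_coe_iff.1 (countable_of_pairwise_precDelta_of_abs_sub_lt hδ hchain hcover hconn
    fun g k => (hF.closeOn hδ M).trans ((hF.closeOn hδ M).symm g.2) k.2)

/-- **Theorem 3.6 (2).** Let `M ⊆ K` be closed with `K ∖ M = ⋃ₙ Hₙ`, each `Hₙ` open in
its closure and each point of `Hₙ` having a local base of connected sets relative to
`cl(Hₙ)`. If `M` has the Bishop property (B), then so does `K`. -/
theorem stmt8 {K : Type*} [TopologicalSpace K] [CompactSpace K] [T2Space K]
    (M : Set K) (hM : IsClosed M) (H : ℕ → Set K) (hcover : Mᶜ = ⋃ n, H n)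
    (hopen : ∀ n, ∃ U : Set K, IsOpen U ∧ H n = U ∩ closure (H n))
    (hconn : ∀ n, ∀ t, ∀ ht : t ∈ H n, HasConnBase (closure (H n)) t (subset_closure ht))
    (hMB : @HasBishop ↥M _ (isCompact_iff_compactSpace.mp hM.isCompact) inferInstance) :
    HasBishop K := by
  exact stmt8_general M hM H hcover.subset hconn hMB
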